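/- Let n ≥ 1, d ∈ ℝ^n with d > 0 entrywise, y ∈ ℝ^n, and σ, τ ∈ S_n. If τ is chosen such that y_{τ(1)}/d_{τ(1)} ≥ y_{τ(2)}/d_{τ(2)} ≥ … ≥ y_{τ(n)}/d_{τ(n)}, then A_{στ} · y = E_{d,y}(σ). -/

import Mathlib

open Finset

noncomputable def th {n : ℕ} (d y : Fin n → ℝ) (c : ℝ) : ℝ :=
  sInf ((fun i => (∑ j, max (y j - y i / d i * d j) 0) + y i / d i * c) ''
    {i : Fin n | 0 < d i})

noncomputable def psum {n : ℕ} (d : Fin n → ℝ) (σ : Equiv.Perm (Fin n)) (j : ℕ) : ℝ :=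
  ∑ i ∈ Finset.univ.filter (fun i : Fin n => (i : ℕ) < j), d (σ i)

noncomputable def Emap {n : ℕ} (d y : Fin n → ℝ) (σ : Equiv.Perm (Fin n)) : Fin n → ℝ :=
  fun k => th d y (psum d σ ((σ.symm k : ℕ) + 1)) - th d y (psum d σ (σ.symm k : ℕ))

def dStoch {n : ℕ} (d : Fin n → ℝ) (A : Matrix (Fin n) (Fin n) ℝ) : Prop :=
  (∀ i j, 0 ≤ A i j) ∧ (∀ j, ∑ i, A i j = 1) ∧ A.mulVec d = d

def Mset {n : ℕ} (d y : Fin n → ℝ) : Set (Fin n → ℝ) :=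
  {x | ∃ A : Matrix (Fin n) (Fin n) ℝ, dStoch d A ∧ A.mulVec y = x}

noncomputable def Aentry {n : ℕ} (d : Fin n → ℝ) (σ τ : Equiv.Perm (Fin n))
    (α : ℕ → Fin n) (j k : Fin n) : ℝ :=
  if k = α j.val ∧ (α j.val).val < (α (j.val + 1)).val then
    (psum d τ ((α j.val).val + 1) - psum d σ j.val) / d (τ (α j.val))
  else if (α j.val).val < k.val ∧ k.val < (α (j.val + 1)).val then 1
  else if (α j.val).val < (α (j.val + 1)).val ∧ k = α (j.val + 1) then
    (psum d σ (j.val + 1) - psum d τ (α (j.val + 1)).val) / d (τ (α (j.val + 1)))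
  else if α j.val = α (j.val + 1) ∧ k = α (j.val + 1) then
    d (σ j) / d (τ (α (j.val + 1)))
  else 0

noncomputable def Amat {n : ℕ} (d : Fin n → ℝ) (σ τ : Equiv.Perm (Fin n))
    (α : ℕ → Fin n) : Matrix (Fin n) (Fin n) ℝ :=
  Matrix.of fun p q => Aentry d σ τ α (σ.symm p) (τ.symm q)

theorem psum_succ' {n : ℕ} (f : Fin n → ℝ) (σ : Equiv.Perm (Fin n)) (a : Fin n) :
    psum f σ (a.val + 1) = psum f σ a.val + f (σ a) := by
  unfold psum
  have : (Finset.univ.filter (fun i : Fin n => (i : ℕ) < a.val + 1))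
      = insert a (Finset.univ.filter (fun i : Fin n => (i : ℕ) < a.val)) := by
    ext i
    simp only [Finset.mem_filter, Finset.mem_univ, true_and, Finset.mem_insert, Fin.ext_iff]
    omega
  rw [this, Finset.sum_insert (by simp), add_comm]

theorem psum_mono' {n : ℕ} (d : Fin n → ℝ) (hd : ∀ i, 0 < d i) (σ : Equiv.Perm (Fin n)) :
    Monotone (psum d σ) := by
  intro a b hab
  unfold psum
  apply Finset.sum_le_sum_of_subset_of_nonneg
  · intro i
    simp only [Finset.mem_filter, Finset.mem_univ, true_and]
    omega
  · intros
    exact (hd _).le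

theorem psum_all {n : ℕ} (d : Fin n → ℝ) (σ : Equiv.Perm (Fin n)) :
    psum d σ n = ∑ i, d i := by
  unfold psum
  rw [Finset.filter_true_of_mem (fun i _ => i.isLt)]
  exact Equiv.sum_comp σ d

theorem psum_between {n : ℕ} (f : Fin n → ℝ) (τ : Equiv.Perm (Fin n)) (a b : ℕ) (hab : a < b) :
    ∑ k : Fin n, (if a < k.val ∧ k.val < b then f (τ k) else 0)
      = psum f τ b - psum f τ (a + 1) := by
  unfold psum
  rw [Finset.sum_filter, Finset.sum_filter, ← Finset.sum_sub_distrib]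
  apply Finset.sum_congr rfl
  intro k _
  split_ifs <;> first | omega | simp

theorem th_eq {n : ℕ} (d y : Fin n → ℝ) (hd : ∀ i, 0 < d i) (τ : Equiv.Perm (Fin n))
    (hτ : Antitone (fun j : Fin n => y (τ j) / d (τ j))) (a : Fin n) (c : ℝ)
    (h1 : psum d τ a.val ≤ c) (h2 : c ≤ psum d τ (a.val + 1)) :
    th d y c = psum y τ a.val + y (τ a) / d (τ a) * (c - psum d τ a.val) := by
  unfold th
  apply IsLeast.csInf_eq
  constructor
  · refine ⟨τ a, hd _, ?_⟩
    have : ∑ j, max (y j - y (τ a) / d (τ a) * d j) 0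
        = psum y τ a.val - y (τ a) / d (τ a) * psum d τ a.val := by
      rw [← Equiv.sum_comp τ]
      unfold psum
      rw [Finset.mul_sum, ← Finset.sum_sub_distrib, Finset.sum_filter]
      apply Finset.sum_congr rfl
      intro k _
      have hk := hd (τ k)
      have e : y (τ k) = y (τ k) / d (τ k) * d (τ k) := by field_simp
      split_ifs with h
      · apply max_eq_left
        have := hτ (show k ≤ a from h.le)
        simp only at this
        nlinarith
      · apply max_eq_right
        have := hτ (show a ≤ k from not_lt.mp h)
        simp only at this
        nlinarith
    simp only [this]
    ring
  · rintro _ ⟨i, _, rfl⟩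
    simp only
    generalize y i / d i = r
    rw [psum_succ'] at h2
    have ha := hd (τ a)
    set s := (c - psum d τ a.val) / d (τ a) with hs
    have hs0 : 0 ≤ s := div_nonneg (by linarith) ha.le
    have hs1 : s ≤ 1 := by rw [hs, div_le_one ha]; linarith
    have hc : c = psum d τ a.val + s * d (τ a) := by rw [hs]; field_simp; ring
    have key : psum y τ a.val - r * psum d τ a.val + s * (y (τ a) - r * d (τ a))
        ≤ ∑ j, max (y j - r * d j) 0 := by
      have e : psum y τ a.val - r * psum d τ a.val + s * (y (τ a) - r * d (τ a))
        = ∑ k, ((if k.val < a.val then y (τ k) - r * d (τ k) else 0)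
            + (if k = a then s * (y (τ a) - r * d (τ a)) else 0)) := by
        rw [Finset.sum_add_distrib, ← Finset.sum_filter]
        unfold psum
        rw [Finset.mul_sum, ← Finset.sum_sub_distrib]
        simp
      rw [e, ← Equiv.sum_comp τ (fun j => max (y j - r * d j) 0)]
      apply Finset.sum_le_sum
      intro k _
      by_cases hka : k = a
      · subst hka
        simp only [lt_irrefl, if_false, if_true, zero_add]
        have m1 := le_max_left (y (τ k) - r * d (τ k)) 0
        have m2 := le_max_right (y (τ k) - r * d (τ k)) 0
        nlinarith
      · rw [if_neg hka, add_zero]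
        split_ifs
        · exact le_max_left _ _
        · exact le_max_right _ _
    have e2 : y (τ a) / d (τ a) * (c - psum d τ a.val) = s * y (τ a) := by rw [hs]; ring
    rw [e2]
    have : r * c = r * psum d τ a.val + r * (s * d (τ a)) := by rw [hc]; ring
    linarith

theorem stmt6 (n : ℕ) (hn : 1 ≤ n) (d : Fin n → ℝ) (hd : ∀ i, 0 < d i)
    (y : Fin n → ℝ) (σ τ : Equiv.Perm (Fin n))
    (hτ : Antitone (fun j : Fin n => y (τ j) / d (τ j)))
    (α : ℕ → Fin n)
    (hα0 : (α 0).val = 0) (hαn : (α n).val = n - 1)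
    (hα : ∀ j : ℕ, 1 ≤ j → j ≤ n - 1 →
      psum d τ (α j).val < psum d σ j ∧ psum d σ j ≤ psum d τ ((α j).val + 1)) :
    (Amat d σ τ α).mulVec y = Emap d y σ := by
  have hb : ∀ j : ℕ, j ≤ n →
      psum d τ (α j).val ≤ psum d σ j ∧ psum d σ j ≤ psum d τ ((α j).val + 1) := by
    intro j hj
    rcases Nat.eq_zero_or_pos j with rfl | h0
    · have z : ∀ ρ : Equiv.Perm (Fin n), psum d ρ 0 = 0 := by intro ρ; simp [psum]
      rw [hα0]
      refine ⟨by rw [z, z], ?_⟩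
      have := psum_mono' d hd τ (Nat.zero_le (0 + 1))
      rw [z] at this ⊢
      exact this
    · rcases hj.lt_or_eq with h | rfl
      · have := hα j h0 (by omega)
        exact ⟨this.1.le, this.2⟩
      · rw [hαn, Nat.sub_add_cancel hn, psum_all, psum_all]
        refine ⟨?_, le_rfl⟩
        rw [← psum_all d τ]
        exact psum_mono' d hd τ (by omega)
  funext p
  obtain ⟨j, rfl⟩ := σ.surjective p
  simp only [Emap, Equiv.symm_apply_apply, Matrix.mulVec, dotProduct, Amat, Matrix.of_apply]
  obtain ⟨l1, u1⟩ := hb j.val j.isLt.le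
  obtain ⟨l2, u2⟩ := hb (j.val + 1) j.isLt
  rw [th_eq d y hd τ hτ _ _ l1 u1, th_eq d y hd τ hτ _ _ l2 u2, ← Equiv.sum_comp τ]
  simp only [Equiv.symm_apply_apply, Aentry]
  have hS := psum_succ' d σ j
  have hj := hd (σ j)
  generalize α j.val = a at *
  generalize α (j.val + 1) = b at *
  have hab : a ≤ b := by
    by_contra hlt
    have hlt : b.val + 1 ≤ a.val := not_le.mp hlt
    have := psum_mono' d hd τ hlt
    linarith
  have ha := hd (τ a)
  rcases hab.eq_or_lt with rfl | hlt
  · simp only [lt_irrefl, and_false, false_and, if_false, true_and, ite_mul, zero_mul]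
    have : ∀ k : Fin n, ¬ (a.val < k.val ∧ k.val < a.val) := fun k => by omega
    simp only [this, if_false, Finset.sum_ite_eq', Finset.sum_ite_eq, Finset.mem_univ, if_true]
    rw [hS]
    ring
  · have hlt' : a.val < b.val := hlt
    have e : ∀ k : Fin n, (if k = a ∧ a.val < b.val then
        (psum d τ (a.val + 1) - psum d σ j.val) / d (τ a)
      else if a.val < k.val ∧ k.val < b.val then 1
      else if a.val < b.val ∧ k = b then
        (psum d σ (j.val + 1) - psum d τ b.val) / d (τ b)
      else if a = b ∧ k = b then d (σ j) / d (τ b) else 0) * y (τ k)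
      = (if k = a then (psum d τ (a.val + 1) - psum d σ j.val) / d (τ a) * y (τ a) else 0)
        + (if a.val < k.val ∧ k.val < b.val then y (τ k) else 0)
        + (if k = b then (psum d σ (j.val + 1) - psum d τ b.val) / d (τ b) * y (τ b) else 0) := by
      intro k
      by_cases h1 : k = a
      · subst h1
        simp [hlt', hlt.ne]
      · by_cases h2 : k = b
        · subst h2
          simp [hlt', hlt.ne']
        · simp [h1, h2]
    rw [Finset.sum_congr rfl (fun k _ => e k), Finset.sum_add_distrib, Finset.sum_add_distrib,
      psum_between y τ _ _ hlt']
    simp only [Finset.sum_ite_eq', Finset.mem_univ, if_true]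
    rw [psum_succ' y τ a, psum_succ' d τ a]
    field_simp
    ring
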